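/- Fix a nonzero integer Δ and let t be the number of distinct prime factors of Δ. Then the set of pairs (A, B) ∈ ℤ × ℤ such that 4A³ + 27B² ≠ 0, the discriminant −16(4A³ + 27B²) of the elliptic curve Y² = X³ + A·X + B equals Δ, and this curve has a rational point of order 7, is finite and has cardinality at most 7¹⁹⁴⁴⁰ + 6·7^(70(t+1)). -/

import Mathlib

open WeierstrassCurve

/-!
A curve over `ℚ` with a point of order seven has a Tate normal form with some parameter
`d = m / n`, and `c₄` of this form is prime to `m n (m - n)`. Comparing `c₄³ / Δ` with that of the
integral model, every prime dividing `m n (m - n)` divides the given discriminant, so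
`m + (-n) + (n - m) = 0` is a solution of the unit equation over the primes dividing it; for a fixed
discriminant, this solution determines the curve.

Following Evertse, the solutions of the unit equation are counted by Padé approximation. For
`x₀ + x₁ + x₂ = 0`, the integrals of `((t - r₀)(t - r₁)(t - r₂))^N` between pairs of roots with
differences `xᵢ` yield integral linear forms showing that, among solutions whose `p`-adic absolute
values have nearly the same relative sizes, the logarithmic heights `h ≤ h'` of two distinct ones
satisfy `9/5 h ≤ h' ≤ 19 h`. Such a class therefore has at most seven members once the heights are
large, and a pigeonhole argument bounds the number of classes.
-/

section Pade

lemma integral_pow_mul_one_sub_pow (a b : ℕ) : ∫ s in (0 : ℝ)..1, s ^ a * (1 - s) ^ b =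
    (a.factorial * b.factorial : ℝ) / (a + b + 1).factorial := by
  have hbeta : Complex.betaIntegral (a + 1) (b + 1) =
      ((∫ s in (0 : ℝ)..1, s ^ a * (1 - s) ^ b : ℝ) : ℂ) := by
    rw [Complex.betaIntegral, ← intervalIntegral.integral_ofReal]
    simp
  have hGamma := Complex.Gamma_mul_Gamma_eq_betaIntegral (s := a + 1) (t := b + 1)
    (by norm_cast; positivity) (by norm_cast; positivity)
  have hsum : (a : ℂ) + 1 + (b + 1) = (a + b + 1 : ℕ) + 1 := by push_cast; ring
  rw [hbeta, hsum, Complex.Gamma_nat_eq_factorial, Complex.Gamma_nat_eq_factorial,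
    Complex.Gamma_nat_eq_factorial] at hGamma
  rw [eq_div_iff (by positivity), mul_comm]
  exact_mod_cast hGamma.symm

/-- The binary form of degree `N` that appears in the Padé approximants of `(1 - z) ^ (2N + 1)`,
up to a constant: it is `∫ s ^ N (1 - s) ^ N ((1 - s) X - s Y) ^ N` over `[0, 1]`. -/
def pade {R : Type*} [CommRing R] (N : ℕ) (X Y : R) : R :=
  ∑ m ∈ Finset.range (N + 1),
    (((N + m).choose N * (2 * N - m).choose N : ℕ) : R) * X ^ (N - m) * (-Y) ^ m

lemma choose_mul_factorial_mul_factorial_eq {N m : ℕ} (hm : m ≤ N) :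
    N.choose m * ((N + m).factorial * (2 * N - m).factorial) =
      N.factorial ^ 3 * ((N + m).choose N * (2 * N - m).choose N) := by
  have hNm := Nat.choose_mul_factorial_mul_factorial hm
  rw [← Nat.choose_mul_factorial_mul_factorial (Nat.le_add_right N m),
    ← Nat.choose_mul_factorial_mul_factorial (show N ≤ 2 * N - m by omega),
    Nat.add_sub_cancel_left, show 2 * N - m - N = N - m by omega]
  calc
    _ = (N.choose m * m.factorial * (N - m).factorial) * N.factorial ^ 2 *
        ((N + m).choose N * (2 * N - m).choose N) := by ring
    _ = _ := by rw [hNm]; ring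

lemma integral_pade (N : ℕ) (X Y : ℝ) :
    ∫ s in (0 : ℝ)..1, (s * (1 - s)) ^ N * ((1 - s) * X - s * Y) ^ N =
      (N.factorial : ℝ) ^ 3 / (3 * N + 1).factorial * pade N X Y := by
  have hexpand (s : ℝ) : (s * (1 - s)) ^ N * ((1 - s) * X - s * Y) ^ N =
      ∑ m ∈ Finset.range (N + 1),
        (N.choose m * X ^ (N - m) * (-Y) ^ m) * (s ^ (N + m) * (1 - s) ^ (2 * N - m)) := by
    rw [show (1 - s) * X - s * Y = s * -Y + (1 - s) * X by ring, add_pow, Finset.mul_sum]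
    refine Finset.sum_congr rfl fun m hm ↦ ?_
    rw [show 2 * N - m = N + (N - m) by grind]
    simp only [mul_pow, pow_add]
    ring
  simp_rw [hexpand]
  rw [intervalIntegral.integral_finsetSum fun _ _ ↦
    Continuous.intervalIntegrable (by fun_prop) _ _, pade, Finset.mul_sum]
  refine Finset.sum_congr rfl fun m hm ↦ ?_
  rw [Finset.mem_range, Nat.lt_succ_iff] at hm
  have hcoef : (N.choose m : ℝ) * ((N + m).factorial * (2 * N - m).factorial) =
      N.factorial ^ 3 * ((N + m).choose N * (2 * N - m).choose N : ℕ) := by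
    exact_mod_cast choose_mul_factorial_mul_factorial_eq hm
  rw [intervalIntegral.integral_const_mul, integral_pow_mul_one_sub_pow,
    show N + m + (2 * N - m) + 1 = 3 * N + 1 by omega]
  linear_combination (X ^ (N - m) * (-Y) ^ m / (3 * N + 1).factorial) * hcoef

/-- The vector of Evertse's forms attached to a triple with zero sum: its `i`-th entry is divisible
by the `(2N + 1)`-st power of `x i`. -/
def padeVec {R : Type*} [CommRing R] (N : ℕ) (x : Fin 3 → R) (i : Fin 3) : R :=
  x i ^ (2 * N + 1) * pade N (x (i + 2)) (x (i + 1))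

@[to_additive]
lemma prod_fin_three_shift {M : Type*} [CommMonoid M] (f : Fin 3 → M) (i : Fin 3) :
    f i * f (i + 1) * f (i + 2) = ∏ j, f j := by
  rw [Fin.prod_univ_three]
  fin_cases i
  · rfl
  · exact (mul_comm _ _).trans (mul_assoc _ _ _).symm
  · exact (mul_assoc _ _ _).trans (mul_comm _ _)

/-- Substitute `t = (1 - s) * r i + s * r (i + 1)`. -/
lemma integral_prod_sub_pow (N : ℕ) (r : Fin 3 → ℝ) (i : Fin 3) :
    ∫ t in r i..r (i + 1), (∏ j, (t - r j)) ^ N =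
      (-1) ^ N * ((N.factorial : ℝ) ^ 3 / (3 * N + 1).factorial) *
        padeVec N (fun j ↦ r (j + 1) - r j) i := by
  have hsubst := intervalIntegral.smul_integral_comp_mul_add (a := 0) (b := 1)
    (fun t ↦ (∏ j, (t - r j)) ^ N) (r (i + 1) - r i) (r i)
  have hfactor (s : ℝ) : (∏ j, ((r (i + 1) - r i) * s + r i - r j)) ^ N =
      (-1) ^ N * (r (i + 1) - r i) ^ (2 * N) * ((s * (1 - s)) ^ N *
        ((1 - s) * (r i - r (i + 2)) - s * (r (i + 2) - r (i + 1))) ^ N) := by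
    rw [← prod_fin_three_shift _ i, pow_mul]
    simp only [← mul_pow]
    ring
  have h₁ : i + 1 + 1 = i + 2 := by rw [add_assoc]; rfl
  have h₂ : i + 2 + 1 = i := by rw [add_assoc]; exact add_zero i
  simp_rw [hfactor] at hsubst
  rw [mul_zero, zero_add, mul_one, sub_add_cancel, intervalIntegral.integral_const_mul,
    integral_pade, smul_eq_mul] at hsubst
  rw [← hsubst, padeVec]
  simp only [h₁, h₂]
  ring

lemma sum_padeVec_real (N : ℕ) {x : Fin 3 → ℝ} (hx : ∑ i, x i = 0) : ∑ i, padeVec N x i = 0 := by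
  let r : Fin 3 → ℝ := ![0, x 0, x 0 + x 1]
  have hxr : x = fun j ↦ r (j + 1) - r j := by
    rw [Fin.sum_univ_three] at hx
    ext j
    fin_cases j
    · simp [r]
    · simp [r]
    · change x 2 = 0 - (x 0 + x 1)
      linarith
  have hint (a b : ℝ) :
      IntervalIntegrable (fun t ↦ (∏ j, (t - r j)) ^ N) MeasureTheory.volume a b :=
    Continuous.intervalIntegrable (by fun_prop) a b
  have hcycle : ∑ i, ∫ t in r i..r (i + 1), (∏ j, (t - r j)) ^ N = 0 := by
    rw [Fin.sum_univ_three]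
    exact intervalIntegral.integral_add_adjacent_intervals_cancel (hint _ _) (hint _ _)
  simp_rw [integral_prod_sub_pow, ← Finset.mul_sum, ← hxr] at hcycle
  exact (mul_eq_zero.mp hcycle).resolve_left (by positivity)

lemma map_padeVec {R R' : Type*} [CommRing R] [CommRing R'] (f : R →+* R') (N : ℕ)
    (x : Fin 3 → R) (i : Fin 3) : f (padeVec N x i) = padeVec N (fun j ↦ f (x j)) i := by
  simp [padeVec, pade]

/-- Being a polynomial identity with integral coefficients, this follows from the real case. -/
lemma sum_padeVec {R : Type*} [CommRing R] (N : ℕ) {x : Fin 3 → R} (hx : ∑ i, x i = 0) :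
    ∑ i, padeVec N x i = 0 := by
  let X : Fin 3 → MvPolynomial (Fin 2) ℤ := ![.X 0, .X 1, -.X 0 - .X 1]
  have hX : ∑ i, padeVec N X i = 0 := by
    refine MvPolynomial.map_injective (Int.castRingHom ℝ) Int.cast_injective
      (MvPolynomial.funext fun v ↦ ?_)
    simp only [map_sum, map_padeVec, map_zero]
    exact sum_padeVec_real N (by simp [Fin.sum_univ_three, X])
  have hx' : x = fun i ↦ MvPolynomial.aeval ![x 0, x 1] (X i) := by
    rw [Fin.sum_univ_three] at hx
    ext i
    fin_cases i
    · simp [X]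
    · simp [X]
    · simp only [X, Fin.reduceFinMk, Matrix.cons_val, map_sub, map_neg, MvPolynomial.aeval_X]
      linear_combination hx
  rw [hx']
  simp only [← AlgHom.coe_toRingHom, ← map_padeVec, ← map_sum, hX, map_zero]

lemma norm_pade_le {R : Type*} [SeminormedCommRing R] [NormOneClass R] (N : ℕ) {X Y : R} {H : ℝ}
    (hX : ‖X‖ ≤ H) (hY : ‖Y‖ ≤ H) : ‖pade N X Y‖ ≤ (16 * H) ^ N := by
  have hH : 0 ≤ H := (norm_nonneg X).trans hX
  have hterm (m : ℕ) (hm : m ∈ Finset.range (N + 1)) :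
      ‖(((N + m).choose N * (2 * N - m).choose N : ℕ) : R) * X ^ (N - m) * (-Y) ^ m‖ ≤
        (8 * H) ^ N := by
    have hcoef : (N + m).choose N * (2 * N - m).choose N ≤ 8 ^ N := by
      refine (Nat.mul_le_mul (Nat.choose_le_two_pow _ _) (Nat.choose_le_two_pow _ _)).trans_eq ?_
      rw [← pow_add, show N + m + (2 * N - m) = 3 * N by grind, pow_mul]
      norm_num
    rw [mul_pow, ← pow_sub_mul_pow H (show m ≤ N by grind), ← mul_assoc]
    refine norm_mul_le_of_le (norm_mul_le_of_le ?_ ?_) ?_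
    · exact (Nat.norm_cast_le _).trans (by rw [norm_one, mul_one]; exact_mod_cast hcoef)
    · exact (norm_pow_le _ _).trans (by gcongr)
    · exact (norm_pow_le _ _).trans (by rw [norm_neg]; gcongr)
  calc
    ‖pade N X Y‖ ≤ (N + 1 : ℕ) • (8 * H) ^ N := by
      rw [← Finset.card_range (N + 1)]
      exact (norm_sum_le_of_le _ hterm).trans_eq (Finset.sum_const _)
    _ ≤ 2 ^ N * (8 * H) ^ N := by
      rw [nsmul_eq_mul]
      gcongr
      exact_mod_cast Nat.lt_two_pow_self
    _ = (16 * H) ^ N := by rw [← mul_pow]; ring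

lemma pow_mul_pade_pos {R : Type*} [CommRing R] [LinearOrder R] [IsStrictOrderedRing R] (N : ℕ)
    {X Y : R} (hXY : X * Y < 0) : 0 < X ^ N * pade N X Y := by
  have hX : X ≠ 0 := left_ne_zero_of_mul hXY.ne
  rw [pade, Finset.mul_sum]
  refine Finset.sum_pos (fun m hm ↦ ?_) (by simp)
  have hle : m ≤ N := by grind
  have hcoef : 0 < (N + m).choose N * (2 * N - m).choose N :=
    Nat.mul_pos (Nat.choose_pos (by omega)) (Nat.choose_pos (by omega))
  have : 0 < (X ^ (N - m)) ^ 2 := by positivity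
  have hsplit : X ^ N * ((((N + m).choose N * (2 * N - m).choose N : ℕ) : R) * X ^ (N - m) *
      (-Y) ^ m) =
        (((N + m).choose N * (2 * N - m).choose N : ℕ) : R) * (X ^ (N - m)) ^ 2 *
          (-(X * Y)) ^ m := by
    nth_rw 1 [← Nat.sub_add_cancel hle, pow_add]
    rw [← mul_neg, mul_pow]
    ring
  rw [hsplit]
  have := neg_pos.mpr hXY
  positivity

end Pade

section Cross

/-- The area spanned by two triples with zero sum. -/
def cross {R : Type*} [CommRing R] (x y : Fin 3 → R) : R := x 0 * y 1 - x 1 * y 0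

lemma cross_eq {R : Type*} [CommRing R] {x y : Fin 3 → R} (hx : ∑ i, x i = 0)
    (hy : ∑ i, y i = 0) (i : Fin 3) :
    cross x y = x i * y (i + 1) - x (i + 1) * y i := by
  rw [Fin.sum_univ_three] at hx hy
  fin_cases i
  · rfl
  · change x 0 * y 1 - x 1 * y 0 = x 1 * y 2 - x 2 * y 1
    linear_combination y 1 * hx - x 1 * hy
  · change x 0 * y 1 - x 1 * y 0 = x 2 * y 0 - x 0 * y 2
    linear_combination x 0 * hy - y 0 * hx

variable {R : Type*} [CommRing R] [LinearOrder R] [IsStrictOrderedRing R]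

lemma exists_mul_succ_pos {x : Fin 3 → R} (hx : ∀ i, x i ≠ 0) : ∃ i, 0 < x i * x (i + 1) := by
  by_contra! hle
  have hneg (i : Fin 3) : x i * x (i + 1) < 0 := (hle i).lt_of_ne (mul_ne_zero (hx _) (hx _))
  have hsq : 0 < (x 0 * x 1 * x 2) ^ 2 := by
    have := mul_ne_zero (mul_ne_zero (hx 0) (hx 1)) (hx 2)
    positivity
  have hprod : x 0 * x 1 * (x 1 * x 2) * (x 2 * x 0) < 0 :=
    mul_neg_of_pos_of_neg (mul_pos_of_neg_of_neg (hneg 0) (hneg 1)) (hneg 2)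
  exact hprod.not_gt (hsq.trans_eq (by ring))

lemma padeVec_mul_padeVec_succ_pos (N : ℕ) {x : Fin 3 → R} {i : Fin 3}
    (hi : 0 < x i * x (i + 1)) (hi' : x i * x (i + 2) < 0) (hi'' : x (i + 1) * x (i + 2) < 0) :
    0 < padeVec N x i * padeVec N x (i + 1) * (x i * x (i + 2)) ^ N := by
  have h₁ := pow_mul_pade_pos N (X := x (i + 2)) (Y := x (i + 1)) (by rwa [mul_comm])
  have h₂ := pow_mul_pade_pos N hi'
  have hshift : i + 1 + 2 = i ∧ i + 1 + 1 = i + 2 := by fin_cases i <;> decide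
  rw [padeVec, padeVec, hshift.1, hshift.2]
  calc
    0 < (x i * x (i + 1)) ^ (2 * N + 1) * (x (i + 2) ^ N * pade N (x (i + 2)) (x (i + 1))) *
        (x i ^ N * pade N (x i) (x (i + 2))) := by positivity
    _ = _ := by ring

lemma mul_mul_pow_pos_of_cross_padeVec_eq_zero (N : ℕ) {x y : Fin 3 → R} (hx : ∑ i, x i = 0)
    (hy : ∑ i, y i = 0) (hy₀ : ∀ i, y i ≠ 0) {i : Fin 3} (hi : 0 < x i * x (i + 1))
    (hi' : x i * x (i + 2) < 0) (hi'' : x (i + 1) * x (i + 2) < 0)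
    (hcross : cross (padeVec N x) y = 0) : 0 < y i * y (i + 1) * (x i * x (i + 2)) ^ N := by
  have hpos := padeVec_mul_padeVec_succ_pos N hi hi' hi''
  rw [cross_eq (sum_padeVec N hx) hy i, sub_eq_zero] at hcross
  have hne : padeVec N x i * y (i + 1) * (x i * x (i + 2)) ^ N ≠ 0 :=
    mul_ne_zero (mul_ne_zero (by rintro h; simp [h] at hpos) (hy₀ _)) (pow_ne_zero _ hi'.ne)
  refine pos_of_mul_pos_left ((pow_pos (abs_pos.mpr hne) 2).trans_eq ?_) hpos.le
  rw [sq_abs]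
  linear_combination (padeVec N x i * y (i + 1) * (x i * x (i + 2)) ^ (2 * N)) * hcross

-- The sign of `y i * y (i + 1) * (x i * x (i + 2)) ^ N` would have to be positive for both
-- exponents, although `x i * x (i + 2) < 0`.
lemma cross_padeVec_ne_zero_or_succ (N : ℕ) {x y : Fin 3 → R} (hx : ∑ i, x i = 0)
    (hy : ∑ i, y i = 0) (hx₀ : ∀ i, x i ≠ 0) (hy₀ : ∀ i, y i ≠ 0) :
    cross (padeVec N x) y ≠ 0 ∨ cross (padeVec (N + 1) x) y ≠ 0 := by
  by_contra! hzero
  obtain ⟨i, hi⟩ := exists_mul_succ_pos hx₀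
  have hlast : x (i + 2) = -(x i + x (i + 1)) := by
    linarith [(sum_fin_three_shift x i).trans hx]
  have hi' : x i * x (i + 2) < 0 := by rw [hlast]; linarith [mul_self_nonneg (x i)]
  have hi'' : x (i + 1) * x (i + 2) < 0 := by rw [hlast]; linarith [mul_self_nonneg (x (i + 1))]
  have hpos := mul_mul_pow_pos_of_cross_padeVec_eq_zero N hx hy hy₀ hi hi' hi'' hzero.1
  have hpos_succ := mul_mul_pow_pos_of_cross_padeVec_eq_zero _ hx hy hy₀ hi hi' hi'' hzero.2
  rw [pow_succ, ← mul_assoc] at hpos_succ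
  exact hi'.not_gt (pos_of_mul_pos_right hpos_succ hpos.le)

lemma prod_gcd_dvd_cross_padeVec (N : ℕ) {x y : Fin 3 → ℤ} (hx : ∑ i, x i = 0)
    (hy : ∑ i, y i = 0) (hcop : Pairwise fun i j ↦ IsCoprime (x i) (x j)) :
    ((∏ i, Int.gcd (y i) (x i ^ (2 * N + 1)) : ℕ) : ℤ) ∣ cross (padeVec N x) y := by
  push_cast
  refine Fintype.prod_dvd_of_coprime (fun i j hij ↦ ?_) fun i ↦ ?_
  · exact ((hcop hij).pow.of_isCoprime_of_dvd_left (Int.gcd_dvd_right ..)).of_isCoprime_of_dvd_right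
      (Int.gcd_dvd_right ..)
  · rw [cross_eq (sum_padeVec N hx) hy i]
    exact dvd_sub (((Int.gcd_dvd_right ..).mul_right _).mul_right _)
      ((Int.gcd_dvd_left ..).mul_left _)

lemma norm_padeVec_le (N : ℕ) (x : Fin 3 → ℤ) (i : Fin 3) :
    ‖padeVec N x i‖ ≤ ‖x i‖ ^ (2 * N + 1) * (16 * ‖x‖) ^ N := by
  rw [padeVec, norm_mul, norm_pow]
  gcongr
  exact norm_pade_le N (norm_le_pi_norm x _) (norm_le_pi_norm x _)

lemma prod_gcd_le (N : ℕ) {x y : Fin 3 → ℤ} (hx : ∑ i, x i = 0) (hy : ∑ i, y i = 0)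
    (hcop : Pairwise fun i j ↦ IsCoprime (x i) (x j)) (hcross : cross (padeVec N x) y ≠ 0)
    (i : Fin 3) :
    ∏ j, (Int.gcd (y j) (x j ^ (2 * N + 1)) : ℝ) ≤ (16 * ‖x‖) ^ N *
      (‖x i‖ ^ (2 * N + 1) * ‖y‖ + ‖x‖ ^ (2 * N + 1) * ‖y i‖) := by
  have hle := Int.le_of_dvd (abs_pos.mpr hcross)
    ((dvd_abs _ _).mpr (prod_gcd_dvd_cross_padeVec N hx hy hcop))
  calc
    ∏ j, (Int.gcd (y j) (x j ^ (2 * N + 1)) : ℝ) ≤ ‖cross (padeVec N x) y‖ := by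
      rw [Int.norm_eq_abs]
      exact_mod_cast hle
    _ ≤ ‖padeVec N x i‖ * ‖y (i + 1)‖ + ‖padeVec N x (i + 1)‖ * ‖y i‖ := by
      rw [cross_eq (sum_padeVec N hx) hy i, ← norm_mul, ← norm_mul]
      exact norm_sub_le _ _
    _ ≤ ‖x i‖ ^ (2 * N + 1) * (16 * ‖x‖) ^ N * ‖y‖ +
        ‖x‖ ^ (2 * N + 1) * (16 * ‖x‖) ^ N * ‖y i‖ := by
      gcongr
      · exact norm_padeVec_le N x i
      · exact norm_le_pi_norm y _
      · exact (norm_padeVec_le N x _).trans (by gcongr; exact norm_le_pi_norm x _)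
    _ = _ := by ring

end Cross

section Gap

/-- The logarithm of the `p`-part of an integer. -/
noncomputable def logPart (p : ℕ) (n : ℤ) : ℝ := n.natAbs.factorization p * Real.log p

lemma logPart_nonneg (p : ℕ) (n : ℤ) : 0 ≤ logPart p n :=
  mul_nonneg (Nat.cast_nonneg _) (Real.log_natCast_nonneg p)

lemma sum_logPart {S : Finset ℕ} {n : ℤ} (hn : n.natAbs.primeFactors ⊆ S) :
    ∑ p ∈ S, logPart p n = Real.log ‖n‖ := by
  rw [Int.norm_eq_abs, ← Int.cast_abs, ← Nat.cast_natAbs, Real.log_nat_eq_sum_factorization,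
    Finsupp.sum_of_support_subset _ hn _ fun _ _ ↦ by rw [Nat.cast_zero, zero_mul]]
  rfl

lemma logPart_gcd_pow (p : ℕ) {m n : ℤ} (hm : m ≠ 0) (hn : n ≠ 0) (k : ℕ) :
    logPart p (Int.gcd m (n ^ k)) = min (logPart p m) (k * logPart p n) := by
  rw [logPart, Int.natAbs_natCast, Int.gcd,
    Nat.factorization_gcd (Int.natAbs_ne_zero.mpr hm) (by simp [hn]), Finsupp.inf_apply,
    Int.natAbs_pow, Nat.factorization_pow, Finsupp.smul_apply, smul_eq_mul, Nat.cast_min,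
    min_mul_of_nonneg _ _ (Real.log_natCast_nonneg p), Nat.cast_mul, mul_assoc, logPart, logPart]

lemma sum_min_logPart {S : Finset ℕ} {m n : ℤ} (hm : m ≠ 0) (hn : n ≠ 0)
    (hmS : m.natAbs.primeFactors ⊆ S) (k : ℕ) :
    ∑ p ∈ S, min (logPart p m) (k * logPart p n) = Real.log (Int.gcd m (n ^ k)) := by
  simp_rw [← logPart_gcd_pow _ hm hn]
  rw [sum_logPart, Int.norm_natCast]
  exact (Nat.primeFactors_mono (Nat.gcd_dvd_left _ _) (Int.natAbs_ne_zero.mpr hm)).trans hmS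

/-- A solution of the unit equation `x 0 + x 1 + x 2 = 0` in pairwise coprime nonzero integers
all of whose prime factors lie in `S`. -/
structure IsUnitTriple (S : Finset ℕ) (x : Fin 3 → ℤ) : Prop where
  sum_eq_zero : ∑ i, x i = 0
  ne_zero (i : Fin 3) : x i ≠ 0
  isCoprime : Pairwise fun i j ↦ IsCoprime (x i) (x j)
  primeFactors_subset (i : Fin 3) : (x i).natAbs.primeFactors ⊆ S

/-- The logarithm of the `i`-th entry of a triple, relative to that of its sup norm. -/
noncomputable def relLog (x : Fin 3 → ℤ) (i : Fin 3) : ℝ := Real.log ‖x i‖ / Real.log ‖x‖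

/-- The contribution of the prime `p` to `relLog x i`. -/
noncomputable def profile (x : Fin 3 → ℤ) (i : Fin 3) (p : ℕ) : ℝ :=
  logPart p (x i) / Real.log ‖x‖

/-- The `ℓ¹` distance, over the primes in `S`, between the profiles of two triples at index `i`. -/
noncomputable def profileDist (S : Finset ℕ) (x y : Fin 3 → ℤ) (i : Fin 3) : ℝ :=
  ∑ p ∈ S, |profile x i p - profile y i p|

/-- All entries of `x` except possibly the `i`-th are at least half as large as `‖x‖`. -/
def IsLargeAwayFrom (x : Fin 3 → ℤ) (i : Fin 3) : Prop := ∀ j ≠ i, ‖x‖ ≤ 2 * ‖x j‖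

lemma exists_isLargeAwayFrom {x : Fin 3 → ℤ} (hx : ∑ i, x i = 0) : ∃ i, IsLargeAwayFrom x i := by
  obtain ⟨i, -, hi⟩ := Finset.univ.exists_min_image (fun i ↦ ‖x i‖) Finset.univ_nonempty
  refine ⟨i, fun j hj ↦ (pi_norm_le_iff_of_nonneg (by positivity)).mpr fun k ↦ ?_⟩
  by_cases hkj : k = j
  · rw [hkj]; linarith [norm_nonneg (x j)]
  by_cases hki : k = i
  · rw [hki]; linarith [hi j (Finset.mem_univ _), norm_nonneg (x j)]
  have hk : x k = -(x i + x j) := by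
    rw [Fin.sum_univ_three] at hx
    fin_cases i <;> fin_cases j <;> fin_cases k <;> simp_all <;> omega
  rw [hk, norm_neg]
  linarith [norm_add_le (x i) (x j), hi j (Finset.mem_univ _)]

variable {S : Finset ℕ} {x y : Fin 3 → ℤ}

lemma IsUnitTriple.norm_apply_pos (hx : IsUnitTriple S x) (i : Fin 3) : 0 < ‖x i‖ :=
  norm_pos_iff.mpr (hx.ne_zero i)

lemma IsUnitTriple.norm_pos (hx : IsUnitTriple S x) : 0 < ‖x‖ :=
  (hx.norm_apply_pos 0).trans_le (norm_le_pi_norm x 0)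

lemma IsUnitTriple.relLog_le_one (hx : IsUnitTriple S x) (hlog : 0 < Real.log ‖x‖) (i : Fin 3) :
    relLog x i ≤ 1 :=
  (div_le_one hlog).mpr (Real.log_le_log (hx.norm_apply_pos i) (norm_le_pi_norm x i))

lemma IsUnitTriple.one_sub_le_relLog (hx : IsUnitTriple S x) (hlog : 0 < Real.log ‖x‖)
    {i j : Fin 3} (hi : IsLargeAwayFrom x i) (hj : j ≠ i) :
    1 - Real.log 2 / Real.log ‖x‖ ≤ relLog x j := by
  have hle := Real.log_le_log hx.norm_pos (hi j hj)
  rw [Real.log_mul two_ne_zero (hx.norm_apply_pos j).ne'] at hle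
  rw [relLog, one_sub_div hlog.ne']
  gcongr
  linarith

lemma IsUnitTriple.sum_profile (hx : IsUnitTriple S x) (i : Fin 3) :
    ∑ p ∈ S, profile x i p = relLog x i := by
  simp_rw [profile, ← Finset.sum_div, sum_logPart (hx.primeFactors_subset i), relLog]

lemma IsUnitTriple.abs_relLog_sub_le (hx : IsUnitTriple S x) (hy : IsUnitTriple S y) (i : Fin 3) :
    |relLog x i - relLog y i| ≤ profileDist S x y i := by
  rw [← hx.sum_profile, ← hy.sum_profile, ← Finset.sum_sub_distrib]
  exact Finset.abs_sum_le_sum_abs _ _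

lemma IsUnitTriple.min_mul_le_sum_min_logPart (hx : IsUnitTriple S x) (hy : IsUnitTriple S y)
    (hxlog : 0 < Real.log ‖x‖) (hylog : 0 < Real.log ‖y‖) (k : ℕ) (i : Fin 3) :
    min (Real.log ‖y‖) (k * Real.log ‖x‖) *
        ((relLog x i + relLog y i - profileDist S x y i) / 2) ≤
      ∑ p ∈ S, min (logPart p (y i)) (k * logPart p (x i)) := by
  set M := min (Real.log ‖y‖) (k * Real.log ‖x‖)
  have : 0 ≤ M := le_min hylog.le (by positivity)
  rw [← hx.sum_profile, ← hy.sum_profile, profileDist, ← Finset.sum_add_distrib,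
    ← Finset.sum_sub_distrib, Finset.sum_div, Finset.mul_sum]
  refine Finset.sum_le_sum fun p _ ↦ ?_
  have hxp : logPart p (x i) = Real.log ‖x‖ * profile x i p := (mul_div_cancel₀ _ hxlog.ne').symm
  have hyp : logPart p (y i) = Real.log ‖y‖ * profile y i p := (mul_div_cancel₀ _ hylog.ne').symm
  have hxnonneg : 0 ≤ profile x i p := div_nonneg (logPart_nonneg _ _) hxlog.le
  have hynonneg : 0 ≤ profile y i p := div_nonneg (logPart_nonneg _ _) hylog.le
  rw [hxp, hyp, ← mul_assoc, add_sub_assoc]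
  refine le_min ?_ ?_
  · calc
      _ ≤ M * profile y i p := by
        gcongr
        linarith [le_abs_self (profile x i p - profile y i p)]
      _ ≤ _ := by gcongr; exact min_le_left _ _
  · calc
      _ ≤ M * profile x i p := by
        gcongr
        linarith [neg_abs_le (profile x i p - profile y i p)]
      _ ≤ _ := by gcongr; exact min_le_right _ _

lemma log_add_le {a b : ℝ} (ha : 0 < a) (hb : 0 < b) :
    Real.log (a + b) ≤ Real.log 2 + max (Real.log a) (Real.log b) := by
  have hmax : max (Real.log a) (Real.log b) = Real.log (max a b) :=
    (Real.strictMonoOn_log.monotoneOn.map_max ha hb).symm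
  have : 0 < max a b := lt_max_of_lt_left ha
  rw [hmax, ← Real.log_mul two_ne_zero this.ne']
  exact Real.log_le_log (by positivity) (by linarith [le_max_left a b, le_max_right a b])

lemma IsUnitTriple.sum_sum_min_logPart_le (hx : IsUnitTriple S x) (hy : IsUnitTriple S y) {N : ℕ}
    (hcross : cross (padeVec N x) y ≠ 0) (i : Fin 3) :
    ∑ j, ∑ p ∈ S, min (logPart p (y j)) ((2 * N + 1 : ℕ) * logPart p (x j)) ≤
      N * (Real.log 16 + Real.log ‖x‖) + (Real.log 2 +
        max ((2 * N + 1 : ℕ) * Real.log ‖x i‖ + Real.log ‖y‖)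
          ((2 * N + 1 : ℕ) * Real.log ‖x‖ + Real.log ‖y i‖)) := by
  have hgcd (j : Fin 3) : (Int.gcd (y j) (x j ^ (2 * N + 1)) : ℝ) ≠ 0 :=
    Nat.cast_ne_zero.mpr (Int.gcd_ne_zero_left (hy.ne_zero j))
  have hxpos := hx.norm_pos
  have hypos := hy.norm_pos
  have hxi := hx.norm_apply_pos i
  have hyi := hy.norm_apply_pos i
  simp_rw [sum_min_logPart (hy.ne_zero _) (hx.ne_zero _) (hy.primeFactors_subset _)]
  rw [← Real.log_prod fun j _ ↦ hgcd j]
  calc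
    _ ≤ Real.log ((16 * ‖x‖) ^ N *
        (‖x i‖ ^ (2 * N + 1) * ‖y‖ + ‖x‖ ^ (2 * N + 1) * ‖y i‖)) :=
      Real.log_le_log (Finset.prod_pos fun j _ ↦ (Nat.cast_nonneg _).lt_of_ne' (hgcd j))
        (prod_gcd_le N hx.sum_eq_zero hy.sum_eq_zero hx.isCoprime hcross i)
    _ = N * (Real.log 16 + Real.log ‖x‖) +
        Real.log (‖x i‖ ^ (2 * N + 1) * ‖y‖ + ‖x‖ ^ (2 * N + 1) * ‖y i‖) := by
      rw [Real.log_mul (by positivity) (by positivity), Real.log_pow,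
        Real.log_mul (by norm_num) hxpos.ne']
    _ ≤ _ := by
      gcongr
      refine (log_add_le (by positivity) (by positivity)).trans_eq ?_
      rw [Real.log_mul (by positivity) hypos.ne', Real.log_mul (by positivity) hyi.ne',
        Real.log_pow, Real.log_pow]

lemma mul_add_le_max_add_min_mul {a b t : ℝ} (ht : t ≤ 1) :
    a * t + b ≤ max b a + min b a * t := by
  rcases le_total a b with hab | hab
  · rw [max_eq_left hab, min_eq_right hab, add_comm]
  · rw [max_eq_right hab, min_eq_left hab]
    nlinarith

lemma IsUnitTriple.max_mul_log_add_le (hx : IsUnitTriple S x) (hy : IsUnitTriple S y)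
    (hxlog : 0 < Real.log ‖x‖) (hylog : 0 < Real.log ‖y‖) (k : ℕ) (i : Fin 3) :
    max (k * Real.log ‖x i‖ + Real.log ‖y‖) (k * Real.log ‖x‖ + Real.log ‖y i‖) ≤
      max (Real.log ‖y‖) (k * Real.log ‖x‖) +
        min (Real.log ‖y‖) (k * Real.log ‖x‖) * max (relLog x i) (relLog y i) := by
  have hle := max_le (hx.relLog_le_one hxlog i) (hy.relLog_le_one hylog i)
  have hxi : Real.log ‖x i‖ = Real.log ‖x‖ * relLog x i := (mul_div_cancel₀ _ hxlog.ne').symm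
  have hyi : Real.log ‖y i‖ = Real.log ‖y‖ * relLog y i := (mul_div_cancel₀ _ hylog.ne').symm
  rw [hxi, hyi]
  refine max_le ?_ ?_
  · refine le_trans ?_ (mul_add_le_max_add_min_mul hle)
    rw [mul_assoc]
    gcongr
    exact le_max_left _ _
  · rw [max_comm (Real.log ‖y‖), min_comm (Real.log ‖y‖), add_comm]
    refine le_trans ?_ (mul_add_le_max_add_min_mul hle)
    gcongr
    exact le_max_right _ _

lemma IsUnitTriple.min_mul_sub_le_sum_sum_min_logPart (hx : IsUnitTriple S x)
    (hy : IsUnitTriple S y) (hxlog : 0 < Real.log ‖x‖) (hxy : Real.log ‖x‖ ≤ Real.log ‖y‖)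
    {i : Fin 3} (hxi : IsLargeAwayFrom x i) (hyi : IsLargeAwayFrom y i) (k : ℕ) :
    min (Real.log ‖y‖) (k * Real.log ‖x‖) *
        (2 + max (relLog x i) (relLog y i) - ∑ j, profileDist S x y j) - 2 * k * Real.log 2 ≤
      ∑ j, ∑ p ∈ S, min (logPart p (y j)) (k * logPart p (x j)) := by
  have hylog := hxlog.trans_le hxy
  set M := min (Real.log ‖y‖) (k * Real.log ‖x‖)
  have hMnonneg : 0 ≤ M := le_min hylog.le (by positivity)
  have : 0 < Real.log 2 := Real.log_pos one_lt_two
  have hMlog : M * (Real.log 2 / Real.log ‖x‖) ≤ k * Real.log 2 := by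
    calc
      _ ≤ k * Real.log ‖x‖ * (Real.log 2 / Real.log ‖x‖) := by gcongr; exact min_le_right _ _
      _ = k * Real.log 2 := by field_simp
  have hsmall : max (relLog x i) (relLog y i) - profileDist S x y i ≤
      (relLog x i + relLog y i - profileDist S x y i) / 2 := by
    have hdist := abs_le.mp (hx.abs_relLog_sub_le hy i)
    rcases max_cases (relLog x i) (relLog y i) with ⟨hmax, -⟩ | ⟨hmax, -⟩ <;> linarith
  have hlarge (j : Fin 3) (hj : j ≠ i) :
      1 - Real.log 2 / Real.log ‖x‖ - profileDist S x y j ≤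
        (relLog x j + relLog y j - profileDist S x y j) / 2 := by
    have hdist : 0 ≤ profileDist S x y j := Finset.sum_nonneg fun _ _ ↦ abs_nonneg _
    have hquot : Real.log 2 / Real.log ‖y‖ ≤ Real.log 2 / Real.log ‖x‖ := by gcongr
    linarith [hx.one_sub_le_relLog hxlog hxi hj, hy.one_sub_le_relLog hylog hyi hj]
  have hlower (j : Fin 3) := hx.min_mul_le_sum_min_logPart hy hxlog hylog k j
  rw [← sum_fin_three_shift _ i, ← sum_fin_three_shift _ i]
  have hi₁ := (mul_le_mul_of_nonneg_left (hlarge (i + 1) (by simp)) hMnonneg).trans (hlower _)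
  have hi₂ := (mul_le_mul_of_nonneg_left (hlarge (i + 2) (by simp)) hMnonneg).trans (hlower _)
  have hi := (mul_le_mul_of_nonneg_left hsmall hMnonneg).trans (hlower _)
  linarith

lemma IsUnitTriple.gap_inequality (hx : IsUnitTriple S x) (hy : IsUnitTriple S y)
    (hxlog : 0 < Real.log ‖x‖) (hxy : Real.log ‖x‖ ≤ Real.log ‖y‖) {i : Fin 3}
    (hxi : IsLargeAwayFrom x i) (hyi : IsLargeAwayFrom y i) {N : ℕ}
    (hcross : cross (padeVec N x) y ≠ 0) :
    (2 - ∑ j, profileDist S x y j) * min (Real.log ‖y‖) ((2 * N + 1) * Real.log ‖x‖) ≤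
      max (Real.log ‖y‖) ((2 * N + 1) * Real.log ‖x‖) + N * Real.log ‖x‖ +
        (8 * N + 3) * Real.log 2 := by
  have hlog₁₆ : Real.log 16 = 4 * Real.log 2 := by
    rw [show (16 : ℝ) = 2 ^ 4 by norm_num, Real.log_pow]
    norm_num
  have hlower := hx.min_mul_sub_le_sum_sum_min_logPart hy hxlog hxy hxi hyi (2 * N + 1)
  have hupper := hx.sum_sum_min_logPart_le hy hcross i
  have hmax := hx.max_mul_log_add_le hy hxlog (hxlog.trans_le hxy) (2 * N + 1) i
  rw [hlog₁₆] at hupper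
  push_cast at hlower hupper hmax
  linarith

variable (hx : IsUnitTriple S x) (hy : IsUnitTriple S y) (hxlog : 100 * Real.log 2 ≤ Real.log ‖x‖)
  (hxy : Real.log ‖x‖ ≤ Real.log ‖y‖) {i : Fin 3} (hxi : IsLargeAwayFrom x i)
  (hyi : IsLargeAwayFrom y i) (hcross : cross x y ≠ 0)
  (hdist : ∑ j, profileDist S x y j ≤ 1 / 10)

include hx hy hxlog hxy hxi hyi hdist

include hcross in
lemma mul_log_norm_le_log_norm : 9 / 5 * Real.log ‖x‖ ≤ Real.log ‖y‖ := by
  have hlog₂ : 0 < Real.log 2 := Real.log_pos one_lt_two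
  have hpade : padeVec 0 x = x := by ext j; simp [padeVec, pade]
  have hgap := hx.gap_inequality hy (by linarith) hxy hxi hyi (N := 0) (by rwa [hpade])
  simp only [Nat.cast_zero, mul_zero, zero_add, one_mul, zero_mul, add_zero, min_eq_right hxy,
    max_eq_left hxy] at hgap
  nlinarith

lemma cross_padeVec_eq_zero {N : ℕ} (hN : 10 ≤ N)
    (hlower : (2 * N - 3) * Real.log ‖x‖ < Real.log ‖y‖)
    (hupper : Real.log ‖y‖ ≤ (2 * N + 1) * Real.log ‖x‖) : cross (padeVec N x) y = 0 := by
  by_contra hne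
  have hlog₂ : 0 < Real.log 2 := Real.log_pos one_lt_two
  have hgap := hx.gap_inequality hy (by linarith) hxy hxi hyi hne
  rw [min_eq_left hupper, max_eq_right hupper] at hgap
  have hN' : (10 : ℝ) ≤ N := by exact_mod_cast hN
  have hNlog : (8 * N + 3) * Real.log 2 ≤ (8 * N + 3) * (Real.log ‖x‖ / 100) := by
    gcongr
    linarith
  nlinarith

lemma log_norm_le_mul_log_norm : Real.log ‖y‖ ≤ 19 * Real.log ‖x‖ := by
  by_contra! hlarge
  have hpos : 0 < Real.log ‖x‖ := by linarith [Real.log_pos one_lt_two]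
  have hquot : 19 < Real.log ‖y‖ / Real.log ‖x‖ := (lt_div_iff₀ hpos).mpr hlarge
  obtain ⟨N, hN⟩ : ∃ N, N = ⌈(Real.log ‖y‖ / Real.log ‖x‖ - 1) / 2⌉₊ := ⟨_, rfl⟩
  have hle : (Real.log ‖y‖ / Real.log ‖x‖ - 1) / 2 ≤ N := hN ▸ Nat.le_ceil _
  have hlt : N < (Real.log ‖y‖ / Real.log ‖x‖ - 1) / 2 + 1 :=
    hN ▸ Nat.ceil_lt_add_one (by linarith)
  have hupper : Real.log ‖y‖ ≤ (2 * N + 1) * Real.log ‖x‖ :=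
    (div_le_iff₀ hpos).mp (by linarith)
  have hlower : (2 * N - 1) * Real.log ‖x‖ < Real.log ‖y‖ :=
    (lt_div_iff₀ hpos).mp (by linarith)
  have hten : 10 ≤ N := by
    have : (9 : ℝ) < N := by linarith
    exact_mod_cast this
  have hzero := cross_padeVec_eq_zero hx hy hxlog hxy hxi hyi hdist hten (by linarith) hupper
  have hzero_succ := cross_padeVec_eq_zero hx hy hxlog hxy hxi hyi hdist (N := N + 1)
    (by omega) (by push_cast; linarith) (by push_cast; linarith)
  exact (cross_padeVec_ne_zero_or_succ N hx.sum_eq_zero hy.sum_eq_zero hx.ne_zero hy.ne_zero).elim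
    (· hzero) (· hzero_succ)

end Gap

section Counting

lemma card_le_two_pow_of_sum_le {ι : Type*} [Fintype ι] (R : ℕ) {T : Finset (ι → ℕ)}
    (hT : ∀ k ∈ T, ∑ i, k i ≤ R) : T.card ≤ 2 ^ (R + Fintype.card ι) := by
  classical
  calc
    T.card ≤ ((Finset.range (R + 1)).biUnion fun r ↦ Finset.univ.finsuppAntidiag r).card := by
      refine Finset.card_le_card_of_injOn Finsupp.equivFunOnFinite.symm (fun k hk ↦ ?_)
        Finsupp.equivFunOnFinite.symm.injective.injOn
      simpa [Finset.mem_finsuppAntidiag, Nat.lt_succ_iff] using hT k hk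
    _ ≤ ∑ r ∈ Finset.range (R + 1), (Finset.univ.finsuppAntidiag r : Finset (ι →₀ ℕ)).card :=
      Finset.card_biUnion_le
    _ = (R + Fintype.card ι).choose (Fintype.card ι) := by
      simp_rw [Finset.card_finsuppAntidiag_nat_eq_multichoose]
      exact Nat.sum_range_multichoose R (Fintype.card ι)
    _ ≤ 2 ^ (R + Fintype.card ι) := Nat.choose_le_two_pow _ _

lemma abs_sub_lt_one_of_natFloor_eq {u v : ℝ} (hu : 0 ≤ u) (hv : 0 ≤ v) (huv : ⌊u⌋₊ = ⌊v⌋₊) :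
    |u - v| < 1 := by
  have hu' := Nat.lt_floor_add_one u
  have hv' := Nat.lt_floor_add_one v
  have hu'' := Nat.floor_le hu
  have hv'' := Nat.floor_le hv
  rw [huv] at hu' hu''
  rw [abs_lt]
  constructor <;> linarith

lemma natFloor_logb_mod_seven_ne {h q : ℝ} (hh : 1 ≤ h) (hlower : 9 / 5 * h ≤ q)
    (hupper : q ≤ 19 * h) : ⌊Real.logb (9 / 5) h⌋₊ % 7 ≠ ⌊Real.logb (9 / 5) q⌋₊ % 7 := by
  have hnonneg : 0 ≤ Real.logb (9 / 5) h := Real.logb_nonneg (by norm_num) hh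
  have hstep : Real.logb (9 / 5) h + 1 ≤ Real.logb (9 / 5) q := by
    rw [← Real.logb_self_eq_one (b := 9 / 5) (by norm_num), add_comm,
      ← Real.logb_mul (by norm_num) (by positivity)]
    exact Real.logb_le_logb_of_le (by norm_num) (by positivity) hlower
  have hsix : Real.logb (9 / 5) q ≤ Real.logb (9 / 5) h + 6 := by
    rw [← Real.logb_rpow (b := 9 / 5) (x := 6) (by norm_num) (by norm_num),
      ← Real.logb_mul (by positivity) (by positivity)]
    exact Real.logb_le_logb_of_le (by norm_num) (by linarith)
      (hupper.trans (by rw [mul_comm]; gcongr; norm_num))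
  have hfloor_lower := Nat.floor_le_floor hstep
  have hfloor_upper := Nat.floor_le_floor hsix
  rw [Nat.floor_add_one hnonneg] at hfloor_lower
  rw [Nat.floor_add_ofNat hnonneg] at hfloor_upper
  omega

/-- The cell of the profile of `x` in a subdivision of mesh `1 / (30 * #S)`. -/
noncomputable def profileCell (S : Finset ℕ) (x : Fin 3 → ℤ) (c : Fin 3 × S) : ℕ :=
  ⌊30 * S.card * profile x c.1 c.2⌋₊

variable {S : Finset ℕ} {x y : Fin 3 → ℤ}

lemma profile_nonneg (x : Fin 3 → ℤ) (hlog : 0 < Real.log ‖x‖) (i : Fin 3) (p : ℕ) :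
    0 ≤ profile x i p :=
  div_nonneg (logPart_nonneg _ _) hlog.le

lemma IsUnitTriple.sum_profileCell_le (hx : IsUnitTriple S x) (hlog : 0 < Real.log ‖x‖) :
    ∑ c, profileCell S x c ≤ 90 * S.card := by
  have hsum : ∑ c : Fin 3 × S, profile x c.1 c.2 ≤ 3 := by
    rw [Fintype.sum_prod_type]
    simp_rw [Finset.sum_coe_sort S, hx.sum_profile]
    exact (Finset.sum_le_card_nsmul _ _ 1 fun i _ ↦ hx.relLog_le_one hlog i).trans_eq (by simp)
  have hreal : (∑ c, profileCell S x c : ℝ) ≤ 90 * S.card := calc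
    _ ≤ ∑ c : Fin 3 × S, 30 * S.card * profile x c.1 c.2 :=
      Finset.sum_le_sum fun c _ ↦ Nat.floor_le (mul_nonneg (by positivity)
        (profile_nonneg x hlog _ _))
    _ = 30 * S.card * ∑ c : Fin 3 × S, profile x c.1 c.2 := (Finset.mul_sum ..).symm
    _ ≤ 30 * S.card * 3 := by gcongr
    _ = 90 * S.card := by ring
  exact_mod_cast hreal

lemma sum_profileDist_le_of_profileCell_eq (hx : 0 < Real.log ‖x‖) (hy : 0 < Real.log ‖y‖)
    (hxy : profileCell S x = profileCell S y) : ∑ i, profileDist S x y i ≤ 1 / 10 := by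
  rcases S.eq_empty_or_nonempty with rfl | hS
  · simp [profileDist]
  have : (0 : ℝ) < S.card := by exact_mod_cast hS.card_pos
  have hclose (i : Fin 3) (p : ℕ) (hp : p ∈ S) :
      |profile x i p - profile y i p| ≤ 1 / (30 * S.card) := by
    have hlt := abs_sub_lt_one_of_natFloor_eq
      (mul_nonneg (by positivity) (profile_nonneg x hx i p))
      (mul_nonneg (by positivity) (profile_nonneg y hy i p)) (congrFun hxy (i, ⟨p, hp⟩))
    rw [← mul_sub, abs_mul, abs_of_pos (by positivity)] at hlt
    rw [le_div_iff₀' (by positivity)]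
    exact hlt.le
  calc
    _ ≤ ∑ _ : Fin 3, S.card • (1 / (30 * S.card) : ℝ) :=
      Finset.sum_le_sum fun i _ ↦ Finset.sum_le_card_nsmul _ _ _ (hclose i)
    _ = 1 / 10 := by
      simp only [Finset.sum_const, Finset.card_univ, Fintype.card_fin, nsmul_eq_mul]
      field_simp
      norm_num

variable {T : Finset (Fin 3 → ℤ)} (hT : ∀ x ∈ T, IsUnitTriple S x)
  (hlog : ∀ x ∈ T, 100 * Real.log 2 ≤ Real.log ‖x‖)
  (hcross : (T : Set (Fin 3 → ℤ)).Pairwise fun x y ↦ cross x y ≠ 0)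
include hT hlog hcross

lemma injOn_natFloor_logb_mod_seven_profileCell {i : Fin 3} (hi : ∀ x ∈ T, IsLargeAwayFrom x i) :
    Set.InjOn (fun x ↦ (⌊Real.logb (9 / 5) (Real.log ‖x‖)⌋₊ % 7, profileCell S x)) T := by
  have hone (x) (hx : x ∈ T) : 1 ≤ Real.log ‖x‖ := by
    linarith [hlog x hx, Real.log_two_gt_d9]
  intro x hx y hy hxy
  obtain ⟨hmod, hcell⟩ := Prod.mk.inj hxy
  by_contra hne
  wlog hle : Real.log ‖x‖ ≤ Real.log ‖y‖ generalizing x y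
  · exact this hy hx hxy.symm hmod.symm hcell.symm (Ne.symm hne) (le_of_not_ge hle)
  have hdist := sum_profileDist_le_of_profileCell_eq (one_pos.trans_le (hone x hx))
    (one_pos.trans_le (hone y hy)) hcell
  exact natFloor_logb_mod_seven_ne (hone x hx)
    (mul_log_norm_le_log_norm (hT x hx) (hT y hy) (hlog x hx) hle (hi x hx) (hi y hy)
      (hcross hx hy hne) hdist)
    (log_norm_le_mul_log_norm (hT x hx) (hT y hy) (hlog x hx) hle (hi x hx) (hi y hy) hdist) hmod

lemma card_le_of_forall_isLargeAwayFrom {i : Fin 3} (hi : ∀ x ∈ T, IsLargeAwayFrom x i) :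
    T.card ≤ 7 * 2 ^ (93 * S.card) := by
  classical
  have hpos (x) (hx : x ∈ T) : 0 < Real.log ‖x‖ := by
    linarith [hlog x hx, Real.log_pos one_lt_two]
  calc
    T.card ≤ (Finset.range 7 ×ˢ T.image (profileCell S)).card :=
      Finset.card_le_card_of_injOn _
        (fun x hx ↦ Finset.mem_product.mpr
          ⟨Finset.mem_range.mpr (Nat.mod_lt _ (by norm_num)), Finset.mem_image_of_mem _ hx⟩)
        (injOn_natFloor_logb_mod_seven_profileCell hT hlog hcross hi)
    _ ≤ 7 * 2 ^ (90 * S.card + Fintype.card (Fin 3 × S)) := by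
      rw [Finset.card_product, Finset.card_range]
      gcongr
      refine card_le_two_pow_of_sum_le _ fun k hk ↦ ?_
      obtain ⟨x, hx, rfl⟩ := Finset.mem_image.mp hk
      exact (hT x hx).sum_profileCell_le (hpos x hx)
    _ = 7 * 2 ^ (93 * S.card) := by
      rw [Fintype.card_prod, Fintype.card_fin, Fintype.card_coe]
      ring

lemma card_le_of_forall_isUnitTriple : T.card ≤ 21 * 2 ^ (93 * S.card) := by
  classical
  have hcover : T ⊆ Finset.univ.biUnion fun i ↦ {x ∈ T | IsLargeAwayFrom x i} := fun x hx ↦ by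
    simpa [hx] using exists_isLargeAwayFrom (hT x hx).sum_eq_zero
  refine (Finset.card_le_card hcover).trans
    ((Finset.card_biUnion_le_card_mul _ _ (7 * 2 ^ (93 * S.card)) fun i _ ↦ ?_).trans_eq
      (by simp; ring))
  have hsub := Finset.filter_subset (IsLargeAwayFrom · i) T
  exact card_le_of_forall_isLargeAwayFrom (fun x hx ↦ hT x (hsub hx))
    (fun x hx ↦ hlog x (hsub hx)) (hcross.mono hsub) fun x hx ↦ (Finset.mem_filter.mp hx).2

end Counting

section UnitTripleBound

lemma card_le_of_forall_norm_le {ι : Type*} [Fintype ι] {T : Finset (ι → ℤ)} {N : ℕ}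
    (hT : ∀ x ∈ T, ‖x‖ ≤ N) : T.card ≤ (2 * N + 1) ^ Fintype.card ι := by
  classical
  have hbox : T ⊆ Fintype.piFinset fun _ ↦ Finset.Icc (-N : ℤ) N := fun x hx ↦ by
    refine Fintype.mem_piFinset.2 fun i ↦ Finset.mem_Icc.2 (abs_le.1 ?_)
    have hi := (norm_le_pi_norm x i).trans (hT x hx)
    rw [Int.norm_eq_abs] at hi
    exact_mod_cast hi
  refine (Finset.card_le_card hbox).trans_eq ?_
  rw [Fintype.card_piFinset, Finset.prod_const, Int.card_Icc, Finset.card_univ]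
  congr 1
  lia

lemma card_le_of_pairwise_cross_ne_zero {S : Finset ℕ} {T : Finset (Fin 3 → ℤ)}
    (hT : ∀ x ∈ T, IsUnitTriple S x)
    (hcross : (T : Set (Fin 3 → ℤ)).Pairwise fun x y ↦ cross x y ≠ 0) :
    T.card ≤ (2 ^ 101 + 1) ^ 3 + 21 * 2 ^ (93 * S.card) := by
  classical
  rw [← Finset.card_filter_add_card_filter_not (100 * Real.log 2 ≤ Real.log ‖·‖), add_comm]
  refine add_le_add ?_ ?_
  · refine (card_le_of_forall_norm_le (N := 2 ^ 100) fun x hx ↦ ?_).trans_eq (by simp)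
    obtain ⟨hx, hlog⟩ := Finset.mem_filter.1 hx
    rw [not_le, ← Real.log_rpow two_pos, Real.log_lt_log_iff (hT x hx).norm_pos (by positivity)]
      at hlog
    exact_mod_cast hlog.le
  · have hsub := Finset.filter_subset (100 * Real.log 2 ≤ Real.log ‖·‖) T
    exact card_le_of_forall_isUnitTriple (fun x hx ↦ hT x (hsub hx))
      (fun x hx ↦ (Finset.mem_filter.1 hx).2) (hcross.mono hsub)

lemma encard_le_of_forall_finset_card_le {α : Type*} {s : Set α} {n : ℕ}
    (h : ∀ t : Finset α, (t : Set α) ⊆ s → t.card ≤ n) : s.encard ≤ n := by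
  by_contra! hlt
  obtain ⟨t, hts, ht⟩ := Set.exists_subset_encard_eq (Order.add_one_le_of_lt hlt)
  lift t to Finset α using Set.finite_of_encard_eq_coe ht
  rw [Set.encard_coe_eq_coe_finsetCard] at ht
  norm_cast at ht
  exact (h t hts).not_gt (by omega)

lemma two_pow_bound_le_seven_pow_bound (t : ℕ) :
    (2 ^ 101 + 1) ^ 3 + 21 * 2 ^ (93 * t) ≤ 7 ^ 19440 + 6 * 7 ^ (70 * (t + 1)) := by
  refine add_le_add ?_ ?_
  · calc (2 ^ 101 + 1) ^ 3 ≤ 7 ^ 109 := by norm_num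
      _ ≤ 7 ^ 19440 := pow_right_mono₀ (by norm_num) (by norm_num)
  · calc 21 * 2 ^ (93 * t) = 21 * (2 ^ 93) ^ t := by rw [pow_mul]
      _ ≤ 6 * 7 ^ 70 * (7 ^ 70) ^ t :=
        Nat.mul_le_mul (by norm_num) (Nat.pow_le_pow_left (by norm_num) t)
      _ = 6 * 7 ^ (70 * (t + 1)) := by rw [← pow_mul, mul_assoc, ← pow_add]; congr 2; ring

theorem encard_le_of_pairwise_cross_ne_zero {S : Finset ℕ} {U : Set (Fin 3 → ℤ)}
    (hU : ∀ x ∈ U, IsUnitTriple S x) (hcross : U.Pairwise fun x y ↦ cross x y ≠ 0) :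
    U.encard ≤ (7 ^ 19440 + 6 * 7 ^ (70 * (S.card + 1)) : ℕ) :=
  encard_le_of_forall_finset_card_le fun _ hT ↦
    (card_le_of_pairwise_cross_ne_zero (fun x hx ↦ hU x (hT hx)) (hcross.mono hT)).trans
      (two_pow_bound_le_seven_pow_bound _)

end UnitTripleBound

section VariableChange

variable {F : Type*} [Field F] (C : VariableChange F) (W : Affine F)

/-- The `X`-coordinate on `C • W` of a point of `W` with `X`-coordinate `x`. -/
def variableChangeX (x : F) : F := (C.u⁻¹ : Fˣ) ^ 2 * (x - C.r)

/-- The `Y`-coordinate on `C • W` of a point `(x, y)` of `W`. -/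
def variableChangeY (x y : F) : F := (C.u⁻¹ : Fˣ) ^ 3 * (y - C.s * (x - C.r) - C.t)

local notation "φX" => variableChangeX C
local notation "φY" => variableChangeY C

lemma variableChangeX_injective : Function.Injective (variableChangeX C) := fun x₁ x₂ h ↦ by
  simpa [variableChangeX] using h

lemma variableChangeY_injective (x : F) : Function.Injective (variableChangeY C x) :=
  fun y₁ y₂ h ↦ by simpa [variableChangeY] using h

lemma equation_variableChange {x y : F} (h : W.Equation x y) :
    (C • W).toAffine.Equation (φX x) (φY x y) := by
  rw [Affine.equation_iff] at h ⊢
  simp only [variableChange_def, variableChangeX, variableChangeY]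
  linear_combination (C.u⁻¹ : Fˣ) ^ 6 * h

lemma nonsingular_variableChange {x y : F} (h : W.Nonsingular x y) :
    (C • W).toAffine.Nonsingular (φX x) (φY x y) := by
  have partialX : (C • W).toAffine.polynomialX.evalEval (φX x) (φY x y) = (C.u⁻¹ : Fˣ) ^ 4 *
      (W.polynomialX.evalEval x y + C.s * W.polynomialY.evalEval x y) := by
    simp only [Affine.evalEval_polynomialX, Affine.evalEval_polynomialY, variableChange_def,
      variableChangeX, variableChangeY]
    ring
  have partialY : (C • W).toAffine.polynomialY.evalEval (φX x) (φY x y) =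
      (C.u⁻¹ : Fˣ) ^ 3 * W.polynomialY.evalEval x y := by
    simp only [Affine.evalEval_polynomialY, variableChange_def, variableChangeX, variableChangeY]
    ring
  refine ⟨equation_variableChange C W h.1, ?_⟩
  by_contra! hsing
  have hY : W.polynomialY.evalEval x y = 0 := by simpa [partialY] using hsing.2
  have hX : W.polynomialX.evalEval x y = 0 := by simpa [partialX, hY] using hsing.1
  exact h.2.elim (· hX) (· hY)

lemma negY_variableChange (x y : F) :
    (C • W).toAffine.negY (φX x) (φY x y) = φY x (W.negY x y) := by
  simp only [Affine.negY, variableChange_def, variableChangeX, variableChangeY]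
  ring

lemma addX_variableChange (x₁ x₂ l : F) :
    (C • W).toAffine.addX (φX x₁) (φX x₂) ((C.u⁻¹ : Fˣ) * (l - C.s)) = φX (W.addX x₁ x₂ l) := by
  simp only [Affine.addX, variableChange_def, variableChangeX]
  ring

lemma addY_variableChange (x₁ x₂ y₁ l : F) :
    (C • W).toAffine.addY (φX x₁) (φX x₂) (φY x₁ y₁) ((C.u⁻¹ : Fˣ) * (l - C.s)) =
      φY (W.addX x₁ x₂ l) (W.addY x₁ x₂ y₁ l) := by
  rw [Affine.addY, addX_variableChange, Affine.addY, ← negY_variableChange, Affine.negAddY,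
    Affine.negAddY, addX_variableChange]
  congr 1
  simp only [variableChangeX, variableChangeY]
  ring

variable [DecidableEq F]

lemma slope_variableChange {x₁ x₂ y₁ y₂ : F} (h₁ : W.Equation x₁ y₁) (h₂ : W.Equation x₂ y₂)
    (hxy : ¬(x₁ = x₂ ∧ y₁ = W.negY x₂ y₂)) :
    (C • W).toAffine.slope (φX x₁) (φX x₂) (φY x₁ y₁) (φY x₂ y₂) =
      (C.u⁻¹ : Fˣ) * (W.slope x₁ x₂ y₁ y₂ - C.s) := by
  have hu : ((C.u⁻¹ : Fˣ) : F) ≠ 0 := Units.ne_zero _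
  by_cases hx : x₁ = x₂
  · subst hx
    have hy : y₁ ≠ W.negY x₁ y₂ := fun h ↦ hxy ⟨rfl, h⟩
    obtain rfl : y₁ = y₂ := Affine.Y_eq_of_Y_ne h₁ h₂ rfl hy
    rw [Affine.slope_of_Y_ne rfl hy, Affine.slope_of_Y_ne rfl <| by
      rw [negY_variableChange]; exact fun h ↦ hy (variableChangeY_injective C _ h)]
    have hne : y₁ - W.negY x₁ y₁ ≠ 0 := sub_ne_zero.2 hy
    have hne' : φY x₁ y₁ - φY x₁ (W.negY x₁ y₁) = (C.u⁻¹ : Fˣ) ^ 3 * (y₁ - W.negY x₁ y₁) := by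
      simp only [variableChangeY]; ring
    rw [negY_variableChange, hne', div_eq_iff (mul_ne_zero (pow_ne_zero _ hu) hne)]
    field_simp
    simp only [variableChange_def, variableChangeX, variableChangeY, Affine.negY]
    ring
  · rw [Affine.slope_of_X_ne hx,
      Affine.slope_of_X_ne fun h ↦ hx (variableChangeX_injective C h)]
    have hne : x₁ - x₂ ≠ 0 := sub_ne_zero.2 hx
    have hne' : φX x₁ - φX x₂ = (C.u⁻¹ : Fˣ) ^ 2 * (x₁ - x₂) := by
      simp only [variableChangeX]; ring
    rw [hne', div_eq_iff (mul_ne_zero (pow_ne_zero _ hu) hne)]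
    field_simp
    simp only [variableChangeY]
    ring

/-- The isomorphism `W ≅ C • W` on rational points. -/
def pointVariableChange : W.Point →+ (C • W).toAffine.Point where
  toFun
    | .zero => 0
    | .some x y h => .some (φX x) (φY x y) (nonsingular_variableChange C W h)
  map_zero' := rfl
  map_add' := by
    rintro (_ | ⟨x₁, y₁, h₁⟩) (_ | ⟨x₂, y₂, h₂⟩)
    any_goals rfl
    by_cases hxy : x₁ = x₂ ∧ y₁ = W.negY x₂ y₂
    · rw [Affine.Point.add_of_Y_eq hxy.1 hxy.2, Affine.Point.add_of_Y_eq (by rw [hxy.1])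
        (by rw [hxy.1, hxy.2, negY_variableChange])]
    · have hxy' : ¬(φX x₁ = φX x₂ ∧ φY x₁ y₁ = (C • W).toAffine.negY (φX x₂) (φY x₂ y₂)) := by
        rintro ⟨hx, hy⟩
        obtain rfl := variableChangeX_injective C hx
        rw [negY_variableChange] at hy
        exact hxy ⟨rfl, variableChangeY_injective C _ hy⟩
      simp only [Affine.Point.add_some hxy, Affine.Point.add_some hxy',
        slope_variableChange C W h₁.1 h₂.1 hxy, addX_variableChange, addY_variableChange]

lemma pointVariableChange_injective : Function.Injective (pointVariableChange C W) := by
  refine (injective_iff_map_eq_zero _).2 ?_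
  rintro (_ | ⟨x, y, h⟩) hP
  · rfl
  · exact absurd hP (Affine.Point.some_ne_zero _)

end VariableChange

section TateNormalForm

variable {F : Type*} [Field F] [DecidableEq F]

/-- The origin is a rational point of `W` of order `n`. -/
def HasOriginOfOrder (W : Affine F) (n : ℕ) : Prop :=
  ∃ h : W.Nonsingular 0 0, addOrderOf (Affine.Point.some 0 0 h) = n

/-- The curve `E(b, c) : Y² + (1 - c)XY - bY = X³ - bX²` with its marked point `(0, 0)`. -/
def tateNormalForm (b c : F) : Affine F := ⟨1 - c, -b, -b, 0, 0⟩

lemma hasOriginOfOrder_variableChange {W : Affine F} (C : VariableChange F) {x y : F}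
    (h : W.Nonsingular x y) (hx : variableChangeX C x = 0) (hy : variableChangeY C x y = 0) :
    HasOriginOfOrder (C • W) (addOrderOf (Affine.Point.some x y h)) := by
  have h₀ := nonsingular_variableChange C W h
  rw [hx, hy] at h₀
  refine ⟨h₀, ?_⟩
  rw [← addOrderOf_injective _ (pointVariableChange_injective C W)]
  congr 1
  change _ = Affine.Point.some _ _ _
  simp only [hx, hy]

lemma two_nsmul_origin {W : Affine F} (h : W.Nonsingular 0 0) (ha₃ : W.a₃ ≠ 0) (ha₄ : W.a₄ = 0)
    {x y : F} (hx : x = -W.a₂) (hy : y = W.a₁ * W.a₂ - W.a₃) :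
    ∃ h₂ : W.Nonsingular x y, 2 • Affine.Point.some 0 0 h = .some x y h₂ := by
  have hY : (0 : F) ≠ W.negY 0 0 := by simpa [Affine.negY, eq_comm] using ha₃
  have hslope : W.slope 0 0 0 0 = 0 := by simp [Affine.slope_of_Y_ne rfl hY, ha₄]
  have hX₂ : W.addX 0 0 0 = x := by simp [Affine.addX, hx]
  have hY₂ : W.addY 0 0 0 0 = y := by
    simp only [Affine.addY, Affine.addX, Affine.negAddY, Affine.negY, hy]; ring
  have h₂ := Affine.nonsingular_add h h fun hxy ↦ hY hxy.2
  rw [hslope, hX₂, hY₂] at h₂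
  refine ⟨h₂, ?_⟩
  rw [two_nsmul, Affine.Point.add_self_of_Y_ne hY]
  simp only [hslope, hX₂, hY₂]

/-- Move the point to the origin and its tangent line to `Y = 0`. -/
lemma exists_variableChange_hasOriginOfOrder {W : Affine F} {P : W.Point} (hP : 2 • P ≠ 0) :
    ∃ C : VariableChange F, (C • W).a₄ = 0 ∧ HasOriginOfOrder (C • W) (addOrderOf P) := by
  rcases P with _ | ⟨x, y, h⟩
  · exact absurd (nsmul_zero 2) hP
  have hy : y ≠ W.negY x y := fun hy ↦ hP <| by
    rw [two_nsmul, Affine.Point.add_self_of_Y_eq hy]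
  let C : VariableChange F := ⟨1, x, W.slope x x y y, y⟩
  refine ⟨C, ?_, hasOriginOfOrder_variableChange C h ?_ ?_⟩
  · have hslope : W.slope x x y y * (y - W.negY x y) =
        3 * x ^ 2 + 2 * W.a₂ * x + W.a₄ - W.a₁ * y := by
      rw [Affine.slope_of_Y_ne rfl hy, div_mul_cancel₀ _ (sub_ne_zero.2 hy)]
    simp only [variableChange_def, C, inv_one, Units.val_one, Affine.negY] at hslope ⊢
    linear_combination -hslope
  · simp [C, variableChangeX]
  · simp [C, variableChangeY]

/-- Scaling makes the coefficients of `X²` and `Y` equal. -/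
theorem exists_variableChange_eq_tateNormalForm {W : Affine F} {P : W.Point} (h₂ : 2 • P ≠ 0)
    (h₃ : 3 • P ≠ 0) : ∃ (C : VariableChange F) (b c : F),
      C • W = tateNormalForm b c ∧ HasOriginOfOrder (tateNormalForm b c) (addOrderOf P) := by
  obtain ⟨C, ha₄, h, hord⟩ := exists_variableChange_hasOriginOfOrder h₂
  have ha₆ : (C • W).a₆ = 0 := (Affine.nonsingular_zero.1 h).1
  have ha₃ : (C • W).a₃ ≠ 0 := (Affine.nonsingular_zero.1 h).2.resolve_right (· ha₄)
  have ha₂ : (C • W).a₂ ≠ 0 := by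
    intro ha₂
    obtain ⟨_, hdouble⟩ := two_nsmul_origin h ha₃ ha₄ rfl rfl
    have hneg : 2 • Affine.Point.some 0 0 h = -Affine.Point.some 0 0 h := by
      simp only [hdouble, Affine.Point.neg_some, ha₂, Affine.negY]
      simp
    refine h₃ (addOrderOf_dvd_iff_nsmul_eq_zero.1 ?_)
    rw [← hord, addOrderOf_dvd_iff_nsmul_eq_zero, succ_nsmul, hneg, neg_add_cancel]
  let D : VariableChange F := ⟨Units.mk0 _ (div_ne_zero ha₃ ha₂), 0, 0, 0⟩
  have hD : D • C • W = tateNormalForm (-((C • W).a₂ ^ 3 / (C • W).a₃ ^ 2))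
      (1 - (C • W).a₁ * (C • W).a₂ / (C • W).a₃) := by
    rw [variableChange_def _ D, tateNormalForm]
    ext <;> simp [D, ha₄, ha₆] <;> field_simp
  refine ⟨D * C, _, _, by rw [mul_smul, hD], ?_⟩
  rw [← hD, ← hord]
  exact hasOriginOfOrder_variableChange D h (by simp [D, variableChangeX])
    (by simp [D, variableChangeY])

lemma origin_add {W : Affine F} (h : W.Nonsingular 0 0) {x₁ y₁ : F} (h₁ : W.Nonsingular x₁ y₁)
    {l : F} (hx₁ : x₁ ≠ 0) (hl : y₁ = l * x₁) {x y : F} (hx : x = W.addX 0 x₁ l)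
    (hy : y = W.addY 0 x₁ 0 l) : ∃ h' : W.Nonsingular x y,
      Affine.Point.some 0 0 h + .some x₁ y₁ h₁ = .some x y h' := by
  have hslope : W.slope 0 x₁ 0 y₁ = l := by
    rw [Affine.slope_of_X_ne hx₁.symm, zero_sub, zero_sub, neg_div_neg_eq, hl,
      mul_div_cancel_right₀ l hx₁]
  have h' := Affine.nonsingular_add h h₁ fun hxy ↦ hx₁ hxy.1.symm
  rw [hslope, ← hx, ← hy] at h'
  refine ⟨h', ?_⟩
  rw [Affine.Point.add_of_X_ne hx₁.symm]
  simp only [hslope, hx, hy]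

lemma three_nsmul_origin_tateNormalForm {b c : F} (h : (tateNormalForm b c).Nonsingular 0 0) :
    ∃ h₃ : (tateNormalForm b c).Nonsingular c (b - c),
      3 • Affine.Point.some 0 0 h = .some c (b - c) h₃ := by
  have hb : b ≠ 0 := by simpa [tateNormalForm] using h
  obtain ⟨h₂, hP₂⟩ := two_nsmul_origin (x := b) (y := c * b) h (neg_ne_zero.2 hb) rfl
    (by simp [tateNormalForm]) (by simp only [tateNormalForm]; ring)
  rw [succ_nsmul', hP₂]
  refine origin_add h h₂ hb rfl ?_ ?_ <;>
    simp only [tateNormalForm, Affine.addX, Affine.addY, Affine.negAddY, Affine.negY] <;> ring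

lemma four_nsmul_origin_tateNormalForm {c d : F} (hc : c ≠ 0)
    (h : (tateNormalForm (c * d) c).Nonsingular 0 0) :
    ∃ (y : F) (h₄ : (tateNormalForm (c * d) c).Nonsingular (d ^ 2 - d) y),
      4 • Affine.Point.some 0 0 h = .some (d ^ 2 - d) y h₄ := by
  obtain ⟨h₃, hP₃⟩ := three_nsmul_origin_tateNormalForm h
  rw [succ_nsmul', hP₃]
  refine ⟨_, origin_add (l := d - 1) h h₃ hc (by ring) ?_ rfl⟩
  simp only [tateNormalForm, Affine.addX]
  ring

lemma eq_of_hasOriginOfOrder_seven {b c : F} (h : HasOriginOfOrder (tateNormalForm b c) 7) :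
    ∃ d : F, b = d ^ 3 - d ^ 2 ∧ c = d ^ 2 - d := by
  obtain ⟨h, hord⟩ := h
  have hmul {n : ℕ} : n • Affine.Point.some 0 0 h = 0 → 7 ∣ n :=
    fun h ↦ hord ▸ addOrderOf_dvd_of_nsmul_eq_zero h
  obtain ⟨h₃, hP₃⟩ := three_nsmul_origin_tateNormalForm h
  have hc : c ≠ 0 := by
    rintro rfl
    have hneg : 3 • Affine.Point.some 0 0 h = -Affine.Point.some 0 0 h := by
      rw [hP₃, Affine.Point.neg_some]
      simp [Affine.negY, tateNormalForm]
    exact absurd (hmul (n := 4) (by rw [succ_nsmul, hneg, neg_add_cancel])) (by decide)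
  obtain ⟨d, rfl⟩ : ∃ d, b = c * d := ⟨b / c, (mul_div_cancel₀ b hc).symm⟩
  obtain ⟨y, h₄, hP₄⟩ := four_nsmul_origin_tateNormalForm hc h
  have hX : c = d ^ 2 - d := by
    refine (Affine.Point.X_eq_iff (h₁ := h₃) (h₂ := h₄)).2 (.inr ?_)
    rw [← hP₃, ← hP₄, eq_neg_iff_add_eq_zero, ← add_nsmul]
    exact addOrderOf_dvd_iff_nsmul_eq_zero.1 (by rw [hord])
  exact ⟨d, by rw [hX]; ring, hX⟩

/-- The universal curve with a point of order seven, with parameter `m / n`. -/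
def tateSeven {R : Type*} [CommRing R] (m n : R) : WeierstrassCurve R :=
  ⟨n ^ 2 + m * n - m ^ 2, -(m ^ 2 * n * (m - n)), -(m ^ 2 * n ^ 3 * (m - n)), 0, 0⟩

lemma tateSeven_c₄ {R : Type*} [CommRing R] (m n : R) : (tateSeven m n).c₄ =
    m ^ 8 - 12 * m ^ 7 * n + 42 * m ^ 6 * n ^ 2 - 56 * m ^ 5 * n ^ 3 + 35 * m ^ 4 * n ^ 4
      - 14 * m ^ 2 * n ^ 6 + 4 * m * n ^ 7 + n ^ 8 := by
  simp only [c₄, b₂, b₄, tateSeven]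
  ring

lemma tateSeven_Δ {R : Type*} [CommRing R] (m n : R) : (tateSeven m n).Δ =
    (m * n * (m - n)) ^ 7 * (m ^ 3 - 8 * m ^ 2 * n + 5 * m * n ^ 2 + n ^ 3) := by
  simp only [WeierstrassCurve.Δ, b₂, b₄, b₆, b₈, tateSeven]
  ring

/-- Modulo each of `m`, `n` and `m - n`, the invariant `c₄` becomes an eighth power. -/
lemma isCoprime_tateSeven_c₄ {R : Type*} [CommRing R] {m n : R} (h : IsCoprime m n) :
    IsCoprime (m * n * (m - n)) (tateSeven m n).c₄ := by
  have hm : IsCoprime m (tateSeven m n).c₄ := by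
    convert (h.pow_right (n := 8)).add_mul_left_right (m ^ 7 - 12 * m ^ 6 * n + 42 * m ^ 5 * n ^ 2
      - 56 * m ^ 4 * n ^ 3 + 35 * m ^ 3 * n ^ 4 - 14 * m * n ^ 6 + 4 * n ^ 7) using 1
    rw [tateSeven_c₄]; ring
  have hn : IsCoprime n (tateSeven m n).c₄ := by
    convert (h.symm.pow_right (n := 8)).add_mul_left_right (-12 * m ^ 7 + 42 * m ^ 6 * n
      - 56 * m ^ 5 * n ^ 2 + 35 * m ^ 4 * n ^ 3 - 14 * m ^ 2 * n ^ 5 + 4 * m * n ^ 6 + n ^ 7)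
      using 1
    rw [tateSeven_c₄]; ring
  have hmn : IsCoprime (m - n) (tateSeven m n).c₄ := by
    have h' : IsCoprime (m - n) n := by
      simpa [sub_eq_add_neg] using h.add_mul_right_left (-1)
    convert (h'.pow_right (n := 8)).add_mul_left_right (m ^ 7 - 11 * m ^ 6 * n + 31 * m ^ 5 * n ^ 2
      - 25 * m ^ 4 * n ^ 3 + 10 * m ^ 3 * n ^ 4 + 10 * m ^ 2 * n ^ 5 - 4 * m * n ^ 6) using 1
    rw [tateSeven_c₄]; ring
  exact (hm.mul_left hn).mul_left hmn

theorem exists_variableChange_eq_tateSeven {W : Affine F} {P : W.Point} (hP : addOrderOf P = 7) :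
    ∃ (C : VariableChange F) (d : F), C • W = tateSeven d 1 := by
  have hmul {n : ℕ} (hn : ¬7 ∣ n) : n • P ≠ 0 :=
    fun h ↦ hn (hP ▸ addOrderOf_dvd_of_nsmul_eq_zero h)
  obtain ⟨C, b, c, hC, h⟩ :=
    exists_variableChange_eq_tateNormalForm (hmul (n := 2) (by decide)) (hmul (n := 3) (by decide))
  obtain ⟨d, rfl, rfl⟩ := eq_of_hasOriginOfOrder_seven (hP ▸ h)
  refine ⟨C, d, hC.trans ?_⟩
  rw [tateNormalForm, tateSeven]
  ext <;> simp only <;> ring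

end TateNormalForm

section ShortWeierstrass

lemma exists_variableChange_tateSeven {F : Type*} [Field F] (m : F) {n : F} (hn : n ≠ 0) :
    ∃ C : VariableChange F, C • tateSeven (m / n) 1 = tateSeven m n := by
  refine ⟨⟨Units.mk0 _ (pow_ne_zero 2 (inv_ne_zero hn)), 0, 0, 0⟩, ?_⟩
  rw [variableChange_def, tateSeven, tateSeven]
  ext <;> simp <;> field_simp

/-- The short Weierstrass curve `Y² = X³ + AX + B`. -/
abbrev shortCurve {R : Type*} [CommRing R] (A B : R) : WeierstrassCurve R := ⟨0, 0, 0, A, B⟩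

lemma shortCurve_c₄ {R : Type*} [CommRing R] (A B : R) : (shortCurve A B).c₄ = -48 * A := by
  simp only [c₄, b₂, b₄]; ring

lemma shortCurve_c₆ {R : Type*} [CommRing R] (A B : R) : (shortCurve A B).c₆ = -864 * B := by
  simp only [c₆, b₂, b₄, b₆]; ring

lemma shortCurve_Δ {R : Type*} [CommRing R] (A B : R) :
    (shortCurve A B).Δ = -16 * (4 * A ^ 3 + 27 * B ^ 2) := by
  simp only [WeierstrassCurve.Δ, b₂, b₄, b₆, b₈]; ring

/-- Equality of discriminants forces the scaling factors to agree up to sign. -/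
lemma c₄_eq_and_c₆_eq_of_variableChange_eq {F : Type*} [Field F] [LinearOrder F]
    [IsStrictOrderedRing F] {W W' : WeierstrassCurve F} {C C' : VariableChange F}
    (h : C • W = C' • W') (hΔ : W.Δ = W'.Δ) (hΔ₀ : W.Δ ≠ 0) : W.c₄ = W'.c₄ ∧ W.c₆ = W'.c₆ := by
  have hu : ((C.u⁻¹ : Fˣ) : F) ^ 2 = (C'.u⁻¹ : Fˣ) ^ 2 := by
    have hΔu := congrArg WeierstrassCurve.Δ h
    rw [variableChange_Δ, variableChange_Δ, ← hΔ] at hΔu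
    refine (pow_left_inj₀ (sq_nonneg _) (sq_nonneg _) (by norm_num : 6 ≠ 0)).1 ?_
    simpa only [← pow_mul] using mul_right_cancel₀ hΔ₀ hΔu
  have hu₀ : ((C'.u⁻¹ : Fˣ) : F) ^ 2 ≠ 0 := pow_ne_zero 2 (Units.ne_zero _)
  have h₄ := congrArg c₄ h
  have h₆ := congrArg c₆ h
  rw [variableChange_c₄, variableChange_c₄, pow_mul _ 2 2, pow_mul _ 2 2, hu] at h₄
  rw [variableChange_c₆, variableChange_c₆, pow_mul _ 2 3, pow_mul _ 2 3, hu] at h₆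
  exact ⟨mul_left_cancel₀ (pow_ne_zero 2 hu₀) h₄, mul_left_cancel₀ (pow_ne_zero 3 hu₀) h₆⟩

lemma c₄_pow_mul_Δ_of_variableChange_eq {R : Type*} [CommRing R] {W W' : WeierstrassCurve R}
    {C : VariableChange R} (h : C • W = W') : W'.c₄ ^ 3 * W.Δ = W'.Δ * W.c₄ ^ 3 := by
  rw [← h, variableChange_c₄, variableChange_Δ]
  ring

lemma dvd_shortCurve_Δ {A B m n p : ℤ} {C : VariableChange ℚ}
    (hC : C • shortCurve (A : ℚ) B = tateSeven (m : ℚ) n) (hmn : IsCoprime m n)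
    (hp : p ∣ m * n * (m - n)) : p ∣ (shortCurve A B).Δ := by
  have hinv : (tateSeven m n).c₄ ^ 3 * (shortCurve A B).Δ =
      (tateSeven m n).Δ * (shortCurve A B).c₄ ^ 3 := by
    have h := c₄_pow_mul_Δ_of_variableChange_eq hC
    rw [tateSeven_c₄, tateSeven_Δ, shortCurve_c₄, shortCurve_Δ] at h ⊢
    exact_mod_cast h
  have hcop : IsCoprime p ((tateSeven m n).c₄ ^ 3) :=
    ((isCoprime_tateSeven_c₄ hmn).of_isCoprime_of_dvd_left hp).pow_right
  refine hcop.dvd_of_dvd_mul_left (hinv ▸ ?_)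
  rw [tateSeven_Δ]
  exact ((hp.trans (dvd_pow_self _ (by norm_num))).mul_right _).mul_right _

end ShortWeierstrass

section TateParameter

/-- The solution `m - n + (n - m) = 0` of the unit equation attached to the fraction `m / n`. -/
def ratTriple (d : ℚ) : Fin 3 → ℤ := ![d.num, -d.den, d.den - d.num]

lemma cross_ratTriple_ne_zero {d e : ℚ} (hde : d ≠ e) : cross (ratTriple d) (ratTriple e) ≠ 0 := by
  contrapose! hde
  rw [Rat.eq_iff_mul_eq_mul]
  simp only [cross, ratTriple, Matrix.cons_val_zero, Matrix.cons_val_one] at hde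
  linarith

lemma ratTriple_injective : Function.Injective ratTriple := fun d e h ↦ by
  by_contra hde
  exact cross_ratTriple_ne_zero hde (by rw [h, cross]; ring)

lemma sum_ratTriple (d : ℚ) : ∑ i, ratTriple d i = 0 := by
  simp only [Fin.sum_univ_three, ratTriple, Matrix.cons_val]
  ring

lemma pairwise_isCoprime_ratTriple (d : ℚ) :
    Pairwise fun i j ↦ IsCoprime (ratTriple d i) (ratTriple d j) := by
  have h : IsCoprime d.num d.den := d.isCoprime_num_den
  have hnum : IsCoprime d.num (d.den - d.num) := by
    simpa [sub_eq_add_neg] using h.add_mul_left_right (-1)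
  have hden : IsCoprime (d.den : ℤ) (d.den - d.num) := by
    simpa [sub_eq_neg_add] using h.symm.neg_right.add_mul_left_right 1
  intro i j hij
  fin_cases i <;> fin_cases j <;> simp_all [ratTriple, IsCoprime.neg_right_iff, isCoprime_comm]

lemma ratTriple_ne_zero {d : ℚ} (hd₀ : d ≠ 0) (hd₁ : d ≠ 1) (i : Fin 3) : ratTriple d i ≠ 0 := by
  have hden : (d.den : ℤ) ≠ 0 := Int.natCast_ne_zero.2 d.den_nz
  have hsub : (d.den : ℤ) - d.num ≠ 0 := fun h ↦ hd₁ <| by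
    rw [Rat.eq_iff_mul_eq_mul]
    simp [← sub_eq_zero.1 h]
  fin_cases i
  exacts [Rat.num_ne_zero.2 hd₀, neg_ne_zero.2 hden, hsub]

lemma ratTriple_dvd (d : ℚ) (i : Fin 3) : ratTriple d i ∣ d.num * d.den * (d.num - d.den) := by
  fin_cases i
  · exact (dvd_mul_right _ _).mul_right _
  · exact (neg_dvd.2 (dvd_mul_left _ _)).mul_right _
  · exact (dvd_sub_comm.1 dvd_rfl).mul_left _

/-- `d` is a parameter of `Y² = X³ + AX + B` in the universal family of curves with a point of order
seven: the two curves are isomorphic over `ℚ`. -/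
def IsTateParameter (A B : ℤ) (d : ℚ) : Prop :=
  ∃ C : VariableChange ℚ, C • shortCurve (A : ℚ) B = tateSeven d 1

variable {A B : ℤ} {d : ℚ}

lemma IsTateParameter.tateSeven_Δ_ne_zero (hd : IsTateParameter A B d)
    (hΔ : (shortCurve A B).Δ ≠ 0) : (tateSeven d 1).Δ ≠ 0 := by
  obtain ⟨C, hC⟩ := hd
  rw [← hC, variableChange_Δ]
  refine mul_ne_zero (pow_ne_zero _ (Units.ne_zero _)) ?_
  rw [shortCurve_Δ] at hΔ ⊢
  exact_mod_cast hΔ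

lemma IsTateParameter.dvd_Δ (hd : IsTateParameter A B d) {p : ℤ}
    (hp : p ∣ d.num * d.den * (d.num - d.den)) : p ∣ (shortCurve A B).Δ := by
  obtain ⟨C, hC⟩ := hd
  obtain ⟨D, hD⟩ := exists_variableChange_tateSeven (d.num : ℚ) (n := ((d.den : ℤ) : ℚ))
    (by exact_mod_cast d.den_nz)
  rw [Int.cast_natCast, Rat.num_div_den, ← hC, ← mul_smul] at hD
  exact dvd_shortCurve_Δ hD d.isCoprime_num_den hp

lemma IsTateParameter.isUnitTriple (hd : IsTateParameter A B d) (hΔ : (shortCurve A B).Δ ≠ 0) :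
    IsUnitTriple (shortCurve A B).Δ.natAbs.primeFactors (ratTriple d) := by
  have hne := hd.tateSeven_Δ_ne_zero hΔ
  have hd₀ : d ≠ 0 := by rintro rfl; simp [tateSeven_Δ] at hne
  have hd₁ : d ≠ 1 := by rintro rfl; simp [tateSeven_Δ] at hne
  exact ⟨sum_ratTriple d, ratTriple_ne_zero hd₀ hd₁, pairwise_isCoprime_ratTriple d, fun i ↦
    Nat.primeFactors_mono (Int.natAbs_dvd_natAbs.2 (hd.dvd_Δ (ratTriple_dvd d i)))
      (Int.natAbs_ne_zero.2 hΔ)⟩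

lemma IsTateParameter.eq_of_Δ_eq {A' B' : ℤ} (hd : IsTateParameter A B d)
    (hd' : IsTateParameter A' B' d) (hΔ : (shortCurve A B).Δ ≠ 0)
    (h : (shortCurve A B).Δ = (shortCurve A' B').Δ) : A = A' ∧ B = B' := by
  obtain ⟨C, hC⟩ := hd
  obtain ⟨C', hC'⟩ := hd'
  rw [shortCurve_Δ] at hΔ
  rw [shortCurve_Δ, shortCurve_Δ] at h
  obtain ⟨h₄, h₆⟩ := c₄_eq_and_c₆_eq_of_variableChange_eq (hC.trans hC'.symm)
    (by rw [shortCurve_Δ, shortCurve_Δ]; exact_mod_cast h) (by rw [shortCurve_Δ]; exact_mod_cast hΔ)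
  rw [shortCurve_c₄, shortCurve_c₄] at h₄
  rw [shortCurve_c₆, shortCurve_c₆] at h₆
  exact ⟨by simpa using h₄, by simpa using h₆⟩

end TateParameter

theorem bound_order_seven (Δ : ℤ) (hΔ : Δ ≠ 0) (t : ℕ)
    (ht : t = Δ.natAbs.primeFactors.card) (S : Set (ℤ × ℤ))
    (hS : S = {AB : ℤ × ℤ | 4 * AB.1 ^ 3 + 27 * AB.2 ^ 2 ≠ 0 ∧
      -16 * (4 * AB.1 ^ 3 + 27 * AB.2 ^ 2) = Δ ∧
      ∃ P : WeierstrassCurve.Affine.Point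
        (⟨0, 0, 0, (AB.1 : ℚ), (AB.2 : ℚ)⟩ : WeierstrassCurve.Affine ℚ),
        addOrderOf P = 7}) :
    S.Finite ∧ S.ncard ≤ 7 ^ 19440 + 6 * 7 ^ (70 * (t + 1)) := by
  have hdisc (AB) (hAB : AB ∈ S) : (shortCurve AB.1 AB.2).Δ = Δ := by
    rw [hS] at hAB
    rw [shortCurve_Δ, hAB.2.1]
  have hparam (AB) (hAB : AB ∈ S) : ∃ d, IsTateParameter AB.1 AB.2 d := by
    rw [hS] at hAB
    obtain ⟨-, -, P, hP⟩ := hAB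
    obtain ⟨C, d, hC⟩ := exists_variableChange_eq_tateSeven hP
    exact ⟨d, C, hC⟩
  choose! d hd using hparam
  have hinj : Set.InjOn d S := fun x hx y hy hxy ↦ Prod.ext_iff.2 <|
    (hd x hx).eq_of_Δ_eq (hxy ▸ hd y hy) (by rwa [hdisc x hx]) (by rw [hdisc x hx, hdisc y hy])
  have hunit : ∀ x ∈ (ratTriple ∘ d) '' S, IsUnitTriple Δ.natAbs.primeFactors x := by
    rintro _ ⟨x, hx, rfl⟩
    exact hdisc x hx ▸ (hd x hx).isUnitTriple (by rwa [hdisc x hx])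
  have hcross : ((ratTriple ∘ d) '' S).Pairwise fun x y ↦ cross x y ≠ 0 := by
    rintro _ ⟨x, -, rfl⟩ _ ⟨y, -, rfl⟩ hxy
    exact cross_ratTriple_ne_zero fun h ↦ hxy (congrArg ratTriple h)
  rw [← Set.encard_le_coe_iff_finite_ncard_le,
    ← (ratTriple_injective.comp_injOn hinj).encard_image, ht]
  exact encard_le_of_pairwise_cross_ne_zero hunit hcross
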